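/- Let G be a finite group and k a field whose characteristic does not divide |G|. Let e = Σ_{g ∈ G} μ_g·g be a subcentral idempotent of the group Hopf algebra kG, let K be the subgroup of G generated by the support J = {g ∈ G : μ_g ≠ 0}, and let I := span_k{h·e : h ∈ K} ⊆ kG. For any fixed g₀ ∈ G, consider the k-linear map ρ_{g₀} : I → I ⊗ kG defined by ρ_{g₀}(x) = x_{(1)}·e ⊗ g₀·x_{(2)}. Then the partial comodule (I, ρ_{g₀}) is simple: if M is a k-subspace of I such that ρ_{g₀}(M) ⊆ M ⊗ kG (i.e. ρ_{g₀}(x) lies in the image of M ⊗ kG in I ⊗ kG for every x ∈ M), then M = 0 or M = I. -/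

import Mathlib

open TensorProduct

/-- The comultiplication of the group Hopf algebra `kG`, determined by `Δ(g) = g ⊗ g`. -/
noncomputable def gaComul (k G : Type*) [Field k] [Group G] :
    MonoidAlgebra k G →ₗ[k] MonoidAlgebra k G ⊗[k] MonoidAlgebra k G :=
  (Finsupp.lsum k fun g => LinearMap.toSpanSingleton k _
    (MonoidAlgebra.of k G g ⊗ₜ[k] MonoidAlgebra.of k G g)) ∘ₗ
    (MonoidAlgebra.coeffLinearEquiv k).toLinearMap

/-- The counit of the group Hopf algebra `kG`, determined by `ε(g) = 1`. -/
noncomputable def gaCounit (k G : Type*) [Field k] [Group G] :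
    MonoidAlgebra k G →ₗ[k] k :=
  (Finsupp.lsum k fun _ => LinearMap.id) ∘ₗ (MonoidAlgebra.coeffLinearEquiv k).toLinearMap

/-- The antipode of the group Hopf algebra `kG`, determined by `S(g) = g⁻¹`. -/
noncomputable def gaAntipode (k G : Type*) [Field k] [Group G] :
    MonoidAlgebra k G →ₗ[k] MonoidAlgebra k G :=
  MonoidAlgebra.mapDomainLinearMap k k (fun g : G => g⁻¹)

/-!
Reading off the coefficient of `g₀ g` in the second tensor factor of `ρ_{g₀}(x)` leaves a multiple
of `g e`, the scalar being the coefficient of `g` in `x`. Hence a stable subspace `M` contains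
`g e` for every `g` in the support of each of its elements. Starting from some `h e ∈ M`, whose
support is `h J`, and iterating, `M` contains `h s e` for all `s` in the submonoid generated by `J`.
Elements of `J` have finite order, so this submonoid is all of `K`; since `h ∈ K`, this gives
`I ≤ M`.
-/

section SupportStable

variable {k G : Type*} [Semiring k]

/-- The subgroup `K` generated by the support of an element `e` of a group algebra. -/
def supportSubgroup [Group G] (e : MonoidAlgebra k G) : Subgroup G :=
  Subgroup.closure (e.coeff.support : Set G)

/-- The space `I` spanned by the translates `h * e` of `e` by elements of the subgroup that its
support generates, on which the partial coaction lives. -/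
noncomputable def translateSpan [Group G] (e : MonoidAlgebra k G) :
    Submodule k (MonoidAlgebra k G) :=
  Submodule.span k {x | ∃ h ∈ supportSubgroup e, x = MonoidAlgebra.of k G h * e}

/-- Stability of a subspace `M` under `x ↦ g * e` for all `g` in the support of `x`. This is what
invariance under a partial coaction amounts to once the second tensor factor is stripped off. -/
def IsSupportStable [Monoid G] (e : MonoidAlgebra k G) (M : Submodule k (MonoidAlgebra k G)) :
    Prop :=
  ∀ x ∈ M, ∀ g ∈ x.coeff.support, MonoidAlgebra.of k G g * e ∈ M

theorem IsSupportStable.of_mul_mem_of_mem_closure [Monoid G] [IsLeftCancelMul G]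
    {e : MonoidAlgebra k G} {M : Submodule k (MonoidAlgebra k G)} (hM : IsSupportStable e M)
    {h g : G} (hh : MonoidAlgebra.of k G h * e ∈ M)
    (hg : g ∈ Submonoid.closure (e.coeff.support : Set G)) :
    MonoidAlgebra.of k G (h * g) * e ∈ M := by
  induction hg using Submonoid.closure_induction_right with
  | one => rwa [mul_one]
  | mul_right a _ b hb ih =>
    refine hM _ ih _ ?_
    rw [Finsupp.mem_support_iff, ← mul_assoc, MonoidAlgebra.of_apply,
      e.coeff_single_mul_eq_mul_coeff b fun _ _ => mul_right_inj _, one_mul]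
    exact Finsupp.mem_support_iff.1 hb

variable [Group G] {e : MonoidAlgebra k G} {M : Submodule k (MonoidAlgebra k G)}

theorem translateSpan_le_supported (e : MonoidAlgebra k G) :
    translateSpan e ≤ MonoidAlgebra.supported k k (supportSubgroup e : Set G) := by
  refine Submodule.span_le.2 ?_
  rintro _ ⟨h, hh, rfl⟩ g hg
  have hmem : h⁻¹ * g ∈ supportSubgroup e := Subgroup.subset_closure (by simpa using hg)
  exact (Subgroup.mul_mem_cancel_left _ (inv_mem hh)).1 hmem

theorem IsSupportStable.translateSpan_le (hM : IsSupportStable e M)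
    (he : ∀ g ∈ e.coeff.support, IsOfFinOrder g) (hMe : M ≤ translateSpan e) (hM0 : M ≠ ⊥) :
    translateSpan e ≤ M := by
  obtain ⟨x, hxM, hx0⟩ := M.exists_mem_ne_zero_of_ne_bot hM0
  obtain ⟨h, hhx⟩ : x.coeff.support.Nonempty := by simpa using hx0
  have hh : h ∈ supportSubgroup e := translateSpan_le_supported e (hMe hxM) hhx
  refine Submodule.span_le.2 ?_
  rintro _ ⟨g, hg, rfl⟩
  have hmem : h⁻¹ * g ∈ Submonoid.closure (e.coeff.support : Set G) := by
    rw [← Subgroup.closure_toSubmonoid_of_isOfFinOrder he, Subgroup.mem_toSubmonoid]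
    exact mul_mem (inv_mem hh) hg
  simpa only [SetLike.mem_coe, mul_inv_cancel_left] using
    hM.of_mul_mem_of_mem_closure (hM x hxM h hhx) hmem

end SupportStable

section Contraction

variable {R A B : Type*} [CommSemiring R] [AddCommMonoid A] [Module R A] [AddCommMonoid B]
  [Module R B]

/-- Contraction of the second tensor factor with a linear functional, used to extract the
components in `A` of a tensor. -/
noncomputable def contractSnd (f : B →ₗ[R] R) : A ⊗[R] B →ₗ[R] A :=
  (TensorProduct.rid R A).toLinearMap ∘ₗ f.lTensor A

theorem contractSnd_tmul (f : B →ₗ[R] R) (a : A) (b : B) :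
    contractSnd f (a ⊗ₜ[R] b) = f b • a := by
  simp [contractSnd]

theorem contractSnd_mem_of_mem_span {M : Submodule R A} (f : B →ₗ[R] R) {z : A ⊗[R] B}
    (hz : z ∈ Submodule.span R {z | ∃ m ∈ M, ∃ b : B, z = m ⊗ₜ[R] b}) :
    contractSnd f z ∈ M := by
  suffices hle : Submodule.span R {z | ∃ m ∈ M, ∃ b : B, z = m ⊗ₜ[R] b} ≤
      M.comap (contractSnd f) from hle hz
  refine Submodule.span_le.2 ?_
  rintro _ ⟨m, hm, b, rfl⟩
  simpa only [SetLike.mem_coe, Submodule.mem_comap, contractSnd_tmul] using M.smul_mem _ hm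

end Contraction

section PartialCoaction

variable {k G : Type*} [Field k] [Group G]

theorem gaComul_single (g : G) (a : k) :
    gaComul k G (MonoidAlgebra.single g a) =
      a • (MonoidAlgebra.of k G g ⊗ₜ[k] MonoidAlgebra.of k G g) := by
  simp [gaComul, MonoidAlgebra.coeffLinearEquiv]

/-- The partial coaction `ρ_{g₀}(x) = x₍₁₎ e ⊗ g₀ x₍₂₎`, defined on the whole group algebra. -/
noncomputable def partialCoaction (e : MonoidAlgebra k G) (g₀ : G) :
    MonoidAlgebra k G →ₗ[k] MonoidAlgebra k G ⊗[k] MonoidAlgebra k G :=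
  LinearMap.mulLeft k (1 ⊗ₜ[k] MonoidAlgebra.of k G g₀) ∘ₗ
    LinearMap.mulRight k (e ⊗ₜ[k] 1) ∘ₗ gaComul k G

/-- Invariance `ρ_{g₀}(M) ⊆ M ⊗ kG` of a subspace, where `M ⊗ kG` is encoded as the span of its
pure tensors in `kG ⊗ kG`. -/
def IsCoactionStable (e : MonoidAlgebra k G) (g₀ : G) (M : Submodule k (MonoidAlgebra k G)) :
    Prop :=
  ∀ x ∈ M, partialCoaction e g₀ x ∈
    Submodule.span k {z | ∃ m ∈ M, ∃ h : MonoidAlgebra k G, z = m ⊗ₜ[k] h}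

theorem partialCoaction_single (e : MonoidAlgebra k G) (g₀ g : G) (a : k) :
    partialCoaction e g₀ (MonoidAlgebra.single g a) =
      a • ((MonoidAlgebra.of k G g * e) ⊗ₜ[k] MonoidAlgebra.of k G (g₀ * g)) := by
  simp [partialCoaction, gaComul_single]

theorem contractSnd_partialCoaction (e x : MonoidAlgebra k G) (g₀ g : G) :
    contractSnd ((MonoidAlgebra.basis G k).coord (g₀ * g)) (partialCoaction e g₀ x) =
      x.coeff g • (MonoidAlgebra.of k G g * e) := by
  induction x using MonoidAlgebra.induction_linear with
  | zero => simp
  | add x y hx hy => simp only [map_add, hx, hy, MonoidAlgebra.coeff_add, Finsupp.add_apply,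
      add_smul]
  | single h a =>
    rw [partialCoaction_single, map_smul, contractSnd_tmul]
    by_cases hg : h = g <;> simp [hg, MonoidAlgebra.basis]

theorem IsCoactionStable.isSupportStable {e : MonoidAlgebra k G} {g₀ : G}
    {M : Submodule k (MonoidAlgebra k G)} (hM : IsCoactionStable e g₀ M) :
    IsSupportStable e M := by
  intro x hx g hg
  have hmem : x.coeff g • (MonoidAlgebra.of k G g * e) ∈ M := by
    rw [← contractSnd_partialCoaction e x g₀ g]
    exact contractSnd_mem_of_mem_span _ (hM x hx)
  exact (M.smul_mem_iff (Finsupp.mem_support_iff.1 hg)).1 hmem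

theorem stmt17_general {e : MonoidAlgebra k G} (he : ∀ g ∈ e.coeff.support, IsOfFinOrder g)
    {g₀ : G} {M : Submodule k (MonoidAlgebra k G)} (hMe : M ≤ translateSpan e)
    (hM : IsCoactionStable e g₀ M) :
    M = ⊥ ∨ M = translateSpan e :=
  or_iff_not_imp_left.2 fun hM0 => le_antisymm hMe <| hM.isSupportStable.translateSpan_le he hMe hM0

end PartialCoaction

/-- let `G` be a finite group, `k` a field with `char k ∤ |G|`, `e` a
subcentral idempotent of `kG`, `K` the subgroup generated by the support of `e`, and
`I := span_k{h·e : h ∈ K}`. For `g₀ ∈ G`, the partial coaction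
`ρ_{g₀}(x) = x₍₁₎·e ⊗ g₀·x₍₂₎` makes `I` a simple partial comodule: every subspace
`M ⊆ I` with `ρ_{g₀}(M) ⊆ M ⊗ kG` is `0` or `I`. -/
theorem stmt17 (k G : Type*) [Field k] [Group G] [Fintype G]
    (hchar : (Fintype.card G : k) ≠ 0)
    (e : MonoidAlgebra k G) (he0 : e ≠ 0) (hidem : e * e = e)
    (hsub : (e ⊗ₜ[k] (1 : MonoidAlgebra k G)) * gaComul k G e
      = gaComul k G e * (e ⊗ₜ[k] (1 : MonoidAlgebra k G)))
    (K : Subgroup G) (hK : K = Subgroup.closure (e.coeff.support : Set G))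
    (I : Submodule k (MonoidAlgebra k G))
    (hI : I = Submodule.span k
      {x : MonoidAlgebra k G | ∃ h ∈ K, x = MonoidAlgebra.of k G h * e})
    (g₀ : G)
    (M : Submodule k (MonoidAlgebra k G)) (hMI : M ≤ I)
    (hM : ∀ x ∈ M,
      ((1 : MonoidAlgebra k G) ⊗ₜ[k] MonoidAlgebra.of k G g₀)
          * (gaComul k G x * (e ⊗ₜ[k] (1 : MonoidAlgebra k G)))
        ∈ Submodule.span k {z : MonoidAlgebra k G ⊗[k] MonoidAlgebra k G |
            ∃ m ∈ M, ∃ h : MonoidAlgebra k G, z = m ⊗ₜ[k] h}) :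
    M = ⊥ ∨ M = I := by
  subst hK hI
  exact stmt17_general (fun g _ => isOfFinOrder_of_finite g) hMI hM
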